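/- arXiv:2308.13673 — 5 statements merged into one kernel-verified Lean document; each statement's English description precedes it below -/
import Mathlib

section
/- Let θ1, θ2 : ℝ → ℝ be continuous 2π-periodic functions, and let K : [0,1] × [0,2π] → ℝ² be defined by K(s,ϑ) = [s·exp(θ1(ϑ)) + (1−s)·exp(θ2(ϑ))]·v(ϑ). Then the symmetric difference A(θ1) Δ A(θ2) of the two star-shaped sets is contained in the image K([0,1] × [0,2π]). -/
open Set Real

/-- The direction vector `v(ϑ) = (cos ϑ, sin ϑ)`. -/
noncomputable def vdir (ϑ : ℝ) : ℝ × ℝ := (Real.cos ϑ, Real.sin ϑ)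

/-- The star-shaped set `A(θ) = {s·exp(θ(ϑ))·v(ϑ) : 0 ≤ s ≤ 1, 0 ≤ ϑ ≤ 2π}` centered
at the origin. -/
noncomputable def starSet (θ : ℝ → ℝ) : Set (ℝ × ℝ) :=
  {p : ℝ × ℝ | ∃ s ∈ Set.Icc (0 : ℝ) 1, ∃ ϑ ∈ Set.Icc (0 : ℝ) (2 * π),
    p = (s * Real.exp (θ ϑ)) • vdir ϑ}

/-- A point of `A(θ) \ A(η)` lies on the radial segment between the two boundary curves. -/
theorem exists_radial_of_mem_starSet_diff {θ η : ℝ → ℝ} {p : ℝ × ℝ}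
    (hp : p ∈ starSet θ \ starSet η) :
    ∃ t ∈ Set.Icc (0 : ℝ) 1, ∃ ϑ ∈ Set.Icc (0 : ℝ) (2 * π),
      p = (t * Real.exp (θ ϑ) + (1 - t) * Real.exp (η ϑ)) • vdir ϑ := by
  obtain ⟨⟨s, ⟨hs0, hs1⟩, ϑ, hϑ, rfl⟩, hnot⟩ := hp
  have hθ := Real.exp_pos (θ ϑ)
  have hη := Real.exp_pos (η ϑ)
  have hlt : Real.exp (η ϑ) < s * Real.exp (θ ϑ) := by
    by_contra! hle
    refine hnot ⟨s * Real.exp (θ ϑ) / Real.exp (η ϑ), ⟨by positivity, ?_⟩, ϑ, hϑ, ?_⟩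
    · rwa [div_le_one hη]
    · rw [div_mul_cancel₀ _ hη.ne']
  have hle : s * Real.exp (θ ϑ) ≤ Real.exp (θ ϑ) := mul_le_of_le_one_left hθ.le hs1
  have hd : 0 < Real.exp (θ ϑ) - Real.exp (η ϑ) := by linarith
  refine ⟨(s * Real.exp (θ ϑ) - Real.exp (η ϑ)) / (Real.exp (θ ϑ) - Real.exp (η ϑ)),
    ⟨div_nonneg (by linarith) hd.le, ?_⟩, ϑ, hϑ, ?_⟩
  · rw [div_le_one hd]
    linarith
  · congr 1
    have hcancel := div_mul_cancel₀ (s * Real.exp (θ ϑ) - Real.exp (η ϑ)) hd.ne'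
    linear_combination -hcancel

/-- The symmetric difference `A(θ1) Δ A(θ2)` is contained in the image of
`K(s,ϑ) = [s·exp(θ1(ϑ)) + (1−s)·exp(θ2(ϑ))]·v(ϑ)` on `[0,1] × [0,2π]`. -/
theorem stmt0 (θ1 θ2 : ℝ → ℝ) (h1 : Continuous θ1) (h2 : Continuous θ2)
    (hp1 : Function.Periodic θ1 (2 * π)) (hp2 : Function.Periodic θ2 (2 * π)) :
    (starSet θ1 \ starSet θ2) ∪ (starSet θ2 \ starSet θ1) ⊆
      (fun q : ℝ × ℝ =>
          (q.1 * Real.exp (θ1 q.2) + (1 - q.1) * Real.exp (θ2 q.2)) • vdir q.2) ''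
        (Set.Icc (0 : ℝ) 1 ×ˢ Set.Icc (0 : ℝ) (2 * π)) := by
  rintro p (hp | hp)
  · obtain ⟨t, ht, ϑ, hϑ, rfl⟩ := exists_radial_of_mem_starSet_diff hp
    exact ⟨(t, ϑ), ⟨ht, hϑ⟩, rfl⟩
  · obtain ⟨t, ⟨ht0, ht1⟩, ϑ, hϑ, rfl⟩ := exists_radial_of_mem_starSet_diff hp
    refine ⟨(1 - t, ϑ), ⟨⟨sub_nonneg.2 ht1, sub_le_self _ ht0⟩, hϑ⟩, ?_⟩
    dsimp only
    congr 1
    ring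
end

section
/- For every M > 0 there exists a constant C > 0, depending only on M, such that for all continuously differentiable 2π-periodic functions θ1, θ2 : ℝ → ℝ with sup|θi| + sup|θi'| ≤ M for i = 1,2, the two-dimensional Lebesgue measure of the symmetric difference satisfies vol(A(θ1) Δ A(θ2)) ≤ C·sup_{ϑ}|θ1(ϑ) − θ2(ϑ)|. -/
open Set Real MeasureTheory

theorem Function.Periodic.bddAbove_range_abs {f : ℝ → ℝ} {c : ℝ} (hp : Function.Periodic f c)
    (hc : c ≠ 0) (hf : Continuous f) : BddAbove (range fun x => |f x|) := by
  obtain ⟨K, hK⟩ := isBounded_iff_forall_norm_le.1 (hp.isBounded_of_continuous hc hf)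
  refine ⟨K, ?_⟩
  rintro _ ⟨x, rfl⟩
  exact hK _ (mem_range_self x)

theorem Real.exp_max_sub_exp_min_le {a b K : ℝ} (ha : a ≤ K) (hb : b ≤ K) :
    exp (max a b) - exp (min a b) ≤ exp K * |a - b| := by
  have key : ∀ x y : ℝ, x ≤ y → y ≤ K → exp y - exp x ≤ exp K * (y - x) := fun x y hxy hy => by
    have h1 : x - y + 1 ≤ exp (x - y) := add_one_le_exp _
    have h2 : exp x = exp y * exp (x - y) := by rw [← exp_add]; congr 1; ring
    have h3 : exp y ≤ exp K := exp_le_exp.2 hy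
    have h4 : exp y * (y - x) ≤ exp K * (y - x) :=
      mul_le_mul_of_nonneg_right h3 (sub_nonneg.2 hxy)
    nlinarith [exp_pos y]
  rw [← max_sub_min_eq_abs']
  exact key _ _ min_le_max (max_le ha hb)

theorem isCompact_starSet {θ : ℝ → ℝ} (hθ : Continuous θ) : IsCompact (starSet θ) := by
  have h : starSet θ = (fun q : ℝ × ℝ => (q.1 * exp (θ q.2)) • vdir q.2) ''
      (Icc (0 : ℝ) 1 ×ˢ Icc (0 : ℝ) (2 * π)) := by
    ext p
    constructor
    · rintro ⟨s, hs, t, ht, rfl⟩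
      exact ⟨(s, t), ⟨hs, ht⟩, rfl⟩
    · rintro ⟨⟨s, t⟩, ⟨hs, ht⟩, rfl⟩
      exact ⟨s, hs, t, ht, rfl⟩
  rw [h]
  refine (isCompact_Icc.prod isCompact_Icc).image ?_
  unfold vdir
  fun_prop

/-- In polar coordinates, the star-shaped set lies below the graph of `exp ∘ θ`. -/
theorem polarCoord_symm_mem_starSet_iff {θ : ℝ → ℝ} (hp : Function.Periodic θ (2 * π))
    {r φ : ℝ} (hr : 0 < r) : polarCoord.symm (r, φ) ∈ starSet θ ↔ r ≤ exp (θ φ) := by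
  simp only [polarCoord_symm_apply]
  constructor
  · rintro ⟨s, hs, t, -, h⟩
    simp only [vdir, Prod.smul_mk, smul_eq_mul, Prod.mk.injEq] at h
    obtain ⟨hc, hsn⟩ := h
    have hrs : r = s * exp (θ t) := by
      refine (sq_eq_sq₀ hr.le (mul_nonneg hs.1 (exp_pos _).le)).1 ?_
      have h1 : r ^ 2 = (r * cos φ) ^ 2 + (r * sin φ) ^ 2 := by
        linear_combination (-r ^ 2) * sin_sq_add_cos_sq φ
      rw [h1, hc, hsn]
      linear_combination (s * exp (θ t)) ^ 2 * sin_sq_add_cos_sq t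
    rw [← hrs] at hc hsn
    have hang : (φ : Real.Angle) = t :=
      Real.Angle.cos_sin_inj (mul_left_cancel₀ hr.ne' hc) (mul_left_cancel₀ hr.ne' hsn)
    obtain ⟨k, hk⟩ := Real.Angle.angle_eq_iff_two_pi_dvd_sub.1 hang
    have hθ : θ φ = θ t := by
      rw [show φ = t + k * (2 * π) by linarith]
      exact hp.int_mul k t
    rw [hθ, hrs]
    exact mul_le_of_le_one_left (exp_pos _).le hs.2
  · intro h
    let t := toIcoMod two_pi_pos 0 φ
    have ht : t ∈ Ico (0 : ℝ) (0 + 2 * π) := toIcoMod_mem_Ico _ _ _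
    have hφ : φ = t + toIcoDiv two_pi_pos 0 φ * (2 * π) := by
      have := toIcoMod_add_toIcoDiv_zsmul two_pi_pos 0 φ
      rw [zsmul_eq_mul] at this
      exact this.symm
    refine ⟨r / exp (θ φ), ⟨by positivity, (div_le_one (exp_pos _)).2 h⟩, t,
      ⟨ht.1, by linarith [ht.2]⟩, ?_⟩
    have hθ : θ φ = θ t := by
      rw [hφ]
      exact hp.int_mul _ t
    have hc : cos φ = cos t := by rw [hφ, cos_add_int_mul_two_pi]
    have hs : sin φ = sin t := by rw [hφ, sin_add_int_mul_two_pi]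
    rw [← hθ, div_mul_cancel₀ _ (exp_pos _).ne', hc, hs]
    rfl

/-- The region between the graphs of `exp ∘ θ1` and `exp ∘ θ2` over `(-π, π)`, with the radius as
first coordinate. -/
def expStrip (θ1 θ2 : ℝ → ℝ) : Set (ℝ × ℝ) :=
  {p | p.2 ∈ Ioo (-π) π ∧ exp (min (θ1 p.2) (θ2 p.2)) ≤ p.1 ∧ p.1 ≤ exp (max (θ1 p.2) (θ2 p.2))}

theorem measurableSet_expStrip {θ1 θ2 : ℝ → ℝ} (h1 : Continuous θ1) (h2 : Continuous θ2) :
    MeasurableSet (expStrip θ1 θ2) := by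
  have hmin : Continuous fun p : ℝ × ℝ => exp (min (θ1 p.2) (θ2 p.2)) := by fun_prop
  have hmax : Continuous fun p : ℝ × ℝ => exp (max (θ1 p.2) (θ2 p.2)) := by fun_prop
  exact (measurable_snd measurableSet_Ioo).inter
    ((measurableSet_le hmin.measurable measurable_fst).inter
      (measurableSet_le measurable_fst hmax.measurable))

theorem volume_expStrip_le {θ1 θ2 : ℝ → ℝ} (h1 : Continuous θ1) (h2 : Continuous θ2) {K δ : ℝ}
    (hK1 : ∀ x, θ1 x ≤ K) (hK2 : ∀ x, θ2 x ≤ K) (hδ : ∀ x, |θ1 x - θ2 x| ≤ δ) :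
    volume (expStrip θ1 θ2) ≤ ENNReal.ofReal (exp K * δ) * ENNReal.ofReal (2 * π) := by
  rw [Measure.volume_eq_prod, Measure.prod_apply_symm (measurableSet_expStrip h1 h2)]
  calc ∫⁻ y, volume ((fun x => (x, y)) ⁻¹' expStrip θ1 θ2)
      ≤ ∫⁻ y, (Ioo (-π) π).indicator (fun _ => ENNReal.ofReal (exp K * δ)) y := by
        refine lintegral_mono fun y => ?_
        by_cases hy : y ∈ Ioo (-π) π
        · rw [indicator_of_mem hy]
          calc volume ((fun x => (x, y)) ⁻¹' expStrip θ1 θ2)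
              ≤ volume (Icc (exp (min (θ1 y) (θ2 y))) (exp (max (θ1 y) (θ2 y)))) :=
                measure_mono fun x hx => hx.2
            _ ≤ ENNReal.ofReal (exp K * δ) := by
                rw [Real.volume_Icc]
                exact ENNReal.ofReal_le_ofReal ((exp_max_sub_exp_min_le (hK1 y) (hK2 y)).trans
                  (mul_le_mul_of_nonneg_left (hδ y) (exp_pos K).le))
        · rw [show (fun x => (x, y)) ⁻¹' expStrip θ1 θ2 = ∅ from
            eq_empty_of_forall_notMem fun x hx => hy hx.1]
          simp
    _ = ENNReal.ofReal (exp K * δ) * ENNReal.ofReal (2 * π) := by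
        rw [lintegral_indicator measurableSet_Ioo, setLIntegral_const, Real.volume_Ioo]
        congr 2
        ring

theorem volume_starSet_symmDiff_le {θ1 θ2 : ℝ → ℝ} (h1 : Continuous θ1) (h2 : Continuous θ2)
    (hp1 : Function.Periodic θ1 (2 * π)) (hp2 : Function.Periodic θ2 (2 * π)) {K : ℝ}
    (hK1 : ∀ x, θ1 x ≤ K) (hK2 : ∀ x, θ2 x ≤ K) :
    volume ((starSet θ1 \ starSet θ2) ∪ (starSet θ2 \ starSet θ1)) ≤
      ENNReal.ofReal (exp K) * volume (expStrip θ1 θ2) := by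
  set D := (starSet θ1 \ starSet θ2) ∪ (starSet θ2 \ starSet θ1) with hD
  have m1 := (isCompact_starSet h1).measurableSet
  have m2 := (isCompact_starSet h2).measurableSet
  have mD : MeasurableSet D := (m1.diff m2).union (m2.diff m1)
  have mS := measurableSet_expStrip h1 h2
  rw [← lintegral_indicator_one mD, ← lintegral_comp_polarCoord_symm]
  calc ∫⁻ p in polarCoord.target, ENNReal.ofReal p.1 • D.indicator 1 (polarCoord.symm p)
      ≤ ∫⁻ p in polarCoord.target,
          (expStrip θ1 θ2).indicator (fun _ => ENNReal.ofReal (exp K)) p := by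
        refine setLIntegral_mono (measurable_const.indicator mS) ?_
        rintro ⟨r, φ⟩ ⟨hr, hφ⟩
        by_cases hmem : polarCoord.symm (r, φ) ∈ D
        · have hr' : exp (min (θ1 φ) (θ2 φ)) ≤ r ∧ r ≤ exp (max (θ1 φ) (θ2 φ)) := by
            rw [hD, mem_union, mem_sdiff, mem_sdiff, polarCoord_symm_mem_starSet_iff hp1 hr,
              polarCoord_symm_mem_starSet_iff hp2 hr, not_le, not_le] at hmem
            rcases hmem with ⟨ha, hb⟩ | ⟨ha, hb⟩
            · exact ⟨(exp_le_exp.2 (min_le_right _ _)).trans hb.le,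
                ha.trans (exp_le_exp.2 (le_max_left _ _))⟩
            · exact ⟨(exp_le_exp.2 (min_le_left _ _)).trans hb.le,
                ha.trans (exp_le_exp.2 (le_max_right _ _))⟩
          rw [indicator_of_mem hmem, indicator_of_mem (show (r, φ) ∈ expStrip θ1 θ2 from ⟨hφ, hr'⟩),
            Pi.one_apply, smul_eq_mul, mul_one]
          exact ENNReal.ofReal_le_ofReal
            (hr'.2.trans (exp_le_exp.2 (max_le (hK1 φ) (hK2 φ))))
        · rw [indicator_of_notMem hmem, smul_zero]
          exact zero_le
    _ ≤ ∫⁻ p, (expStrip θ1 θ2).indicator (fun _ => ENNReal.ofReal (exp K)) p :=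
        setLIntegral_le_lintegral _ _
    _ = ENNReal.ofReal (exp K) * volume (expStrip θ1 θ2) := lintegral_indicator_const mS _

/-- For every `M > 0` there is `C > 0` depending only on `M` such that, for all `C¹`
`2π`-periodic `θ1, θ2` with `sup|θᵢ| + sup|θᵢ'| ≤ M`, the two-dimensional Lebesgue
measure of `A(θ1) Δ A(θ2)` is at most `C·sup_ϑ |θ1 ϑ − θ2 ϑ|`. -/
theorem stmt1 (M : ℝ) (hM : 0 < M) :
    ∃ C : ℝ, 0 < C ∧
      ∀ θ1 θ2 : ℝ → ℝ,
        ContDiff ℝ 1 θ1 → ContDiff ℝ 1 θ2 →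
        Function.Periodic θ1 (2 * π) → Function.Periodic θ2 (2 * π) →
        (⨆ x, |θ1 x|) + (⨆ x, |deriv θ1 x|) ≤ M →
        (⨆ x, |θ2 x|) + (⨆ x, |deriv θ2 x|) ≤ M →
        volume ((starSet θ1 \ starSet θ2) ∪ (starSet θ2 \ starSet θ1)) ≤
          ENNReal.ofReal (C * ⨆ ϑ, |θ1 ϑ - θ2 ϑ|) := by
  refine ⟨exp M * (exp M * (2 * π)), by positivity, ?_⟩
  intro θ1 θ2 h1 h2 hp1 hp2 hM1 hM2
  have bound : ∀ θ : ℝ → ℝ, ContDiff ℝ 1 θ → Function.Periodic θ (2 * π) →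
      (⨆ x, |θ x|) + (⨆ x, |deriv θ x|) ≤ M → ∀ x, θ x ≤ M := fun θ h hp hθ x => by
    have ha : |θ x| ≤ ⨆ x, |θ x| :=
      le_ciSup (hp.bddAbove_range_abs two_pi_pos.ne' h.continuous) x
    have hd : 0 ≤ ⨆ x, |deriv θ x| := Real.iSup_nonneg fun x => abs_nonneg _
    linarith [le_abs_self (θ x)]
  have hK1 := bound θ1 h1 hp1 hM1
  have hK2 := bound θ2 h2 hp2 hM2
  have hδ : ∀ x, |θ1 x - θ2 x| ≤ ⨆ ϑ, |θ1 ϑ - θ2 ϑ| := le_ciSup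
    ((hp1.sub hp2).bddAbove_range_abs two_pi_pos.ne' (h1.continuous.sub h2.continuous))
  calc volume ((starSet θ1 \ starSet θ2) ∪ (starSet θ2 \ starSet θ1))
      ≤ ENNReal.ofReal (exp M) * volume (expStrip θ1 θ2) :=
        volume_starSet_symmDiff_le h1.continuous h2.continuous hp1 hp2 hK1 hK2
    _ ≤ ENNReal.ofReal (exp M) * (ENNReal.ofReal (exp M * ⨆ ϑ, |θ1 ϑ - θ2 ϑ|) *
          ENNReal.ofReal (2 * π)) := by
        gcongr
        exact volume_expStrip_le h1.continuous h2.continuous hK1 hK2 hδ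
    _ = ENNReal.ofReal (exp M * (exp M * (2 * π)) * ⨆ ϑ, |θ1 ϑ - θ2 ϑ|) := by
        rw [← ENNReal.ofReal_mul' two_pi_pos.le, ← ENNReal.ofReal_mul (exp_pos M).le]
        congr 1
        ring
end

section
/- Let D = {x ∈ ℝ² : |x| < 1/2}, let κ1, κ2 > 0, and define Φ(θ)(x) = κ1·1_{θ(x) ≥ 0} + κ2. For n ≥ 1 let θ_n(x) = 1/n + |x|^{2n} and θ̃_n = −θ_n. Then: (i) sup_{x ∈ D} |θ_n(x) − θ̃_n(x)| ≤ 2/n + 2^{1−2n}, which tends to 0 as n → ∞; (ii) Φ(θ_n)(x) = κ1 + κ2 and Φ(θ̃_n)(x) = κ2 for every x ∈ D, so that ‖Φ(θ_n) − Φ(θ̃_n)‖_{L²(D)} = κ1·(π/4)^{1/2} for every n, which does not tend to 0. In particular the level set parametrization Φ is not uniformly continuous from the supremum metric to L²(D). -/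
open MeasureTheory Real Filter

/-- The Heaviside function `H(z) = 1_{z ≥ 0}`. -/
noncomputable def heaviside (z : ℝ) : ℝ := if 0 ≤ z then 1 else 0

/-- The level set parametrization `Φ(θ)(x) = κ1·H(θ(x)) + κ2`. -/
noncomputable def phiLS (κ1 κ2 : ℝ) (θ : EuclideanSpace ℝ (Fin 2) → ℝ)
    (x : EuclideanSpace ℝ (Fin 2)) : ℝ := κ1 * heaviside (θ x) + κ2

/-- The level set functions `θ_n(x) = 1/n + |x|^{2n}`. -/
noncomputable def θseq (n : ℕ) (x : EuclideanSpace ℝ (Fin 2)) : ℝ :=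
  1 / n + ‖x‖ ^ (2 * n)

theorem θseq_pos {n : ℕ} (hn : 1 ≤ n) (x : EuclideanSpace ℝ (Fin 2)) : 0 < θseq n x := by
  have : (0 : ℝ) < n := by exact_mod_cast hn
  unfold θseq
  positivity

theorem phiLS_of_nonneg (κ1 κ2 : ℝ) {θ : EuclideanSpace ℝ (Fin 2) → ℝ}
    {x : EuclideanSpace ℝ (Fin 2)} (h : 0 ≤ θ x) : phiLS κ1 κ2 θ x = κ1 + κ2 := by
  simp [phiLS, heaviside, h]

theorem phiLS_of_neg (κ1 κ2 : ℝ) {θ : EuclideanSpace ℝ (Fin 2) → ℝ}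
    {x : EuclideanSpace ℝ (Fin 2)} (h : θ x < 0) : phiLS κ1 κ2 θ x = κ2 := by
  simp [phiLS, heaviside, not_le.mpr h]

theorem two_zpow_one_sub_two_mul (n : ℕ) :
    (2 : ℝ) ^ (1 - 2 * (n : ℤ)) = 2 * (1 / 2) ^ (2 * n) := by
  rw [zpow_sub₀ two_ne_zero, zpow_one, one_div, inv_pow, div_eq_mul_inv]
  norm_cast

theorem abs_θseq_sub_neg_le {n : ℕ} (hn : 1 ≤ n) {x : EuclideanSpace ℝ (Fin 2)}
    (hx : x ∈ Metric.ball (0 : EuclideanSpace ℝ (Fin 2)) (1 / 2)) :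
    |θseq n x - (-θseq n x)| ≤ 2 / n + (2 : ℝ) ^ (1 - 2 * (n : ℤ)) := by
  have hx' : ‖x‖ ≤ 1 / 2 := (mem_ball_zero_iff.mp hx).le
  have hpow : ‖x‖ ^ (2 * n) ≤ (1 / 2) ^ (2 * n) := by gcongr
  have hpos := θseq_pos hn x
  rw [abs_of_pos (by linarith), two_zpow_one_sub_two_mul]
  calc θseq n x - (-θseq n x) = 2 / n + 2 * ‖x‖ ^ (2 * n) := by unfold θseq; ring
    _ ≤ 2 / n + 2 * (1 / 2) ^ (2 * n) := by gcongr

theorem tendsto_two_div_add_two_zpow :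
    Tendsto (fun n : ℕ => 2 / (n : ℝ) + (2 : ℝ) ^ (1 - 2 * (n : ℤ))) atTop (nhds 0) := by
  simp_rw [two_zpow_one_sub_two_mul, pow_mul]
  have hgeom : Tendsto (fun n : ℕ => (((1 : ℝ) / 2) ^ 2) ^ n) atTop (nhds 0) :=
    tendsto_pow_atTop_nhds_zero_of_lt_one (by norm_num) (by norm_num)
  simpa using (tendsto_const_div_atTop_nhds_zero_nat (2 : ℝ)).add (hgeom.const_mul 2)

theorem sqrt_integral_phiLS_θseq_sub {κ1 : ℝ} (hκ1 : 0 ≤ κ1) (κ2 : ℝ) {n : ℕ} (hn : 1 ≤ n) :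
    Real.sqrt (∫ x in Metric.ball (0 : EuclideanSpace ℝ (Fin 2)) (1 / 2),
        (phiLS κ1 κ2 (θseq n) x - phiLS κ1 κ2 (fun y => -θseq n y) x) ^ 2) =
      κ1 * Real.sqrt (π / 4) := by
  have hdiff (x : EuclideanSpace ℝ (Fin 2)) :
      phiLS κ1 κ2 (θseq n) x - phiLS κ1 κ2 (fun y => -θseq n y) x = κ1 := by
    rw [phiLS_of_nonneg κ1 κ2 (θseq_pos hn x).le,
      phiLS_of_neg κ1 κ2 (neg_neg_of_pos (θseq_pos hn x))]
    ring
  have hvol : volume.real (Metric.ball (0 : EuclideanSpace ℝ (Fin 2)) (1 / 2)) = π / 4 := by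
    rw [measureReal_def, EuclideanSpace.volume_ball_fin_two, ENNReal.toReal_mul,
      ENNReal.toReal_pow, ENNReal.toReal_ofReal (by norm_num),
      ENNReal.toReal_ofReal pi_nonneg]
    ring
  simp_rw [hdiff]
  rw [setIntegral_const, hvol, smul_eq_mul, mul_comm, Real.sqrt_mul (sq_nonneg κ1),
    Real.sqrt_sq hκ1]

/-- On `D = {|x| < 1/2}`, with `θ_n(x) = 1/n + |x|^{2n}` and `θ̃_n = −θ_n`:
(i) `sup_D |θ_n − θ̃_n| ≤ 2/n + 2^{1−2n} → 0`; (ii) `Φ(θ_n) = κ1 + κ2` and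
`Φ(θ̃_n) = κ2` on `D`, so `‖Φ(θ_n) − Φ(θ̃_n)‖_{L²(D)} = κ1·(π/4)^{1/2}` for all `n`,
which does not tend to `0`: the level set parametrization is not uniformly continuous. -/
theorem stmt4 (κ1 κ2 : ℝ) (hκ1 : 0 < κ1) (hκ2 : 0 < κ2) :
    (∀ n : ℕ, 1 ≤ n → ∀ x ∈ Metric.ball (0 : EuclideanSpace ℝ (Fin 2)) (1 / 2),
        |θseq n x - (-θseq n x)| ≤ 2 / n + (2 : ℝ) ^ (1 - 2 * (n : ℤ))) ∧
    Tendsto (fun n : ℕ => 2 / (n : ℝ) + (2 : ℝ) ^ (1 - 2 * (n : ℤ))) atTop (nhds 0) ∧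
    (∀ n : ℕ, 1 ≤ n → ∀ x ∈ Metric.ball (0 : EuclideanSpace ℝ (Fin 2)) (1 / 2),
        phiLS κ1 κ2 (θseq n) x = κ1 + κ2 ∧
        phiLS κ1 κ2 (fun y => -θseq n y) x = κ2) ∧
    (∀ n : ℕ, 1 ≤ n →
        Real.sqrt (∫ x in Metric.ball (0 : EuclideanSpace ℝ (Fin 2)) (1 / 2),
            (phiLS κ1 κ2 (θseq n) x - phiLS κ1 κ2 (fun y => -θseq n y) x) ^ 2) =
          κ1 * Real.sqrt (π / 4)) ∧
    ¬ Tendsto (fun n : ℕ =>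
        Real.sqrt (∫ x in Metric.ball (0 : EuclideanSpace ℝ (Fin 2)) (1 / 2),
            (phiLS κ1 κ2 (θseq n) x - phiLS κ1 κ2 (fun y => -θseq n y) x) ^ 2))
      atTop (nhds 0) := by
  refine ⟨fun n hn x hx => abs_θseq_sub_neg_le hn hx, tendsto_two_div_add_two_zpow,
    fun n hn x _ => ⟨phiLS_of_nonneg κ1 κ2 (θseq_pos hn x).le,
      phiLS_of_neg κ1 κ2 (neg_neg_of_pos (θseq_pos hn x))⟩,
    fun n hn => sqrt_integral_phiLS_θseq_sub hκ1.le κ2 hn, fun h => ?_⟩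
  have hconst : Tendsto (fun _ : ℕ => κ1 * Real.sqrt (π / 4)) atTop (nhds 0) :=
    h.congr' ((eventually_ge_atTop 1).mono fun n hn =>
      sqrt_integral_phiLS_θseq_sub hκ1.le κ2 hn)
  have hpos : 0 < κ1 * Real.sqrt (π / 4) := by positivity
  exact hpos.ne (tendsto_nhds_unique hconst tendsto_const_nhds)
end

section
/- Let X ⊆ ℝ^d be a bounded open set, c ∈ ℝ, and let θ0 be a real-valued function that is continuously differentiable on a neighborhood of the closure of X and such that ∇θ0(x) ≠ 0 for every x in the closure of X with θ0(x) = c. Then there exist constants C > 0 and ε0 > 0 such that for all 0 < ε ≤ ε0, the d-dimensional Lebesgue measure of the set V_ε = {x ∈ X : |θ0(x) − c| < ε} satisfies |V_ε| ≤ C·ε. -/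
open MeasureTheory

section SublevelBand

open Metric Set Filter Topology

variable {E : Type*} [MeasurableSpace E]

/-- The part in `s` of the band `|f - c| < ε` has measure `O(ε)` as `ε → 0`. -/
def BandMeasureLinear (μ : Measure E) (f : E → ℝ) (c : ℝ) (s : Set E) : Prop :=
  ∃ C : ℝ, 0 ≤ C ∧ ∃ ε0 : ℝ, 0 < ε0 ∧ ∀ ε : ℝ, 0 < ε → ε ≤ ε0 →
    μ (s ∩ {x | |f x - c| < ε}) ≤ ENNReal.ofReal (C * ε)

lemma BandMeasureLinear.mono {μ : Measure E} {f : E → ℝ} {c : ℝ} {s t : Set E} (hst : s ⊆ t)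
    (ht : BandMeasureLinear μ f c t) : BandMeasureLinear μ f c s := by
  obtain ⟨C, hC, ε0, hε0, h⟩ := ht
  exact ⟨C, hC, ε0, hε0, fun ε hε hle =>
    (measure_mono (inter_subset_inter_left _ hst)).trans (h ε hε hle)⟩

lemma BandMeasureLinear.union {μ : Measure E} {f : E → ℝ} {c : ℝ} {s t : Set E}
    (hs : BandMeasureLinear μ f c s) (ht : BandMeasureLinear μ f c t) :
    BandMeasureLinear μ f c (s ∪ t) := by
  obtain ⟨C, hC, ε0, hε0, h⟩ := hs
  obtain ⟨C', hC', ε0', hε0', h'⟩ := ht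
  refine ⟨C + C', by positivity, min ε0 ε0', lt_min hε0 hε0', fun ε hε hle => ?_⟩
  rw [union_inter_distrib_right, add_mul, ENNReal.ofReal_add (by positivity) (by positivity)]
  exact (measure_union_le _ _).trans (add_le_add (h ε hε (hle.trans (min_le_left _ _)))
    (h' ε hε (hle.trans (min_le_right _ _))))

/-- Away from the level set, thin bands are locally empty. -/
lemma exists_bandMeasureLinear_of_ne [TopologicalSpace E] (μ : Measure E) {f : E → ℝ} {c : ℝ}
    {x : E} (hf : ContinuousAt f x) (hx : f x ≠ c) : ∃ s ∈ 𝓝 x, BandMeasureLinear μ f c s := by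
  have hpos : 0 < |f x - c| := abs_pos.2 (sub_ne_zero.2 hx)
  have hcont : ContinuousAt (fun y => |f y - c|) x := (hf.sub continuousAt_const).abs
  refine ⟨{y | |f x - c| / 2 < |f y - c|}, hcont.eventually_const_lt (half_lt_self hpos), 0,
    le_rfl, |f x - c| / 2, half_pos hpos, fun ε _ hle => ?_⟩
  have : {y | |f x - c| / 2 < |f y - c|} ∩ {y | |f y - c| < ε} = ∅ := by
    ext y
    simp only [mem_inter_iff, mem_ofPred_eq, mem_empty_iff_false, iff_false, not_and, not_lt]
    exact fun h => hle.trans h.le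
  simp [this]

variable [NormedAddCommGroup E] [NormedSpace ℝ E] [BorelSpace E]

/-- If the first `n` translates of `S` by multiples of `w` are pairwise disjoint, then `n` copies
of `S` fit into a slightly larger ball. -/
lemma natCast_mul_measure_le_of_translates (μ : Measure E) [μ.IsAddLeftInvariant] {S : Set E}
    (hS : MeasurableSet S) {x w : E} {r R : ℝ} (hSr : S ⊆ ball x r) {n : ℕ}
    (hn : n * ‖w‖ ≤ R)
    (hw : ∀ y ∈ S, ∀ z ∈ S, ∀ t : ℝ, 1 ≤ |t| → y - z ≠ t • w) :
    n * μ S ≤ μ (ball x (r + R)) := by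
  have hmeas : ∀ k : ℕ, MeasurableSet ((fun y => (k : ℝ) • w + y) ⁻¹' S) := fun k =>
    (measurable_const_add _) hS
  have hdisj : PairwiseDisjoint (Finset.range n : Set ℕ)
      (fun k : ℕ => (fun y => (k : ℝ) • w + y) ⁻¹' S) := by
    intro k _ l _ hkl
    refine Set.disjoint_left.2 fun y hy hy' => ?_
    refine hw _ hy _ hy' ((k : ℝ) - l) ?_ (by simp only [sub_smul]; abel)
    have h : (1 : ℤ) ≤ |(k : ℤ) - l| := Int.one_le_abs (by omega)
    exact_mod_cast h
  calc n * μ S = ∑ k ∈ Finset.range n, μ ((fun y => (k : ℝ) • w + y) ⁻¹' S) := by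
        simp [measure_preimage_add]
    _ = μ (⋃ k ∈ Finset.range n, (fun y => (k : ℝ) • w + y) ⁻¹' S) :=
        (measure_biUnion_finset hdisj fun k _ => hmeas k).symm
    _ ≤ μ (ball x (r + R)) := by
        refine measure_mono (iUnion₂_subset fun k hk y hy => ?_)
        have hy' := hSr hy
        rw [mem_ball, dist_eq_norm] at hy' ⊢
        have hkn : (k : ℝ) ≤ n := by exact_mod_cast (Finset.mem_range.1 hk).le
        have h1 : ‖(k : ℝ) • w‖ ≤ R := by
          rw [norm_smul, Real.norm_natCast]
          exact (mul_le_mul_of_nonneg_right hkn (norm_nonneg w)).trans hn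
        calc ‖y - x‖ = ‖((k : ℝ) • w + y - x) - (k : ℝ) • w‖ := by congr 1; abel
          _ ≤ ‖(k : ℝ) • w + y - x‖ + ‖(k : ℝ) • w‖ := norm_sub_le _ _
          _ < r + R := add_lt_add_of_lt_of_le hy' h1

/-- Near a regular point, the bands have measure `O(ε)`. -/
lemma exists_bandMeasureLinear_of_hasStrictFDerivAt [FiniteDimensional ℝ E] (μ : Measure E)
    [μ.IsAddHaarMeasure] {f : E → ℝ} {f' : E →L[ℝ] ℝ} (c : ℝ) {x : E} {U : Set E} (hU : U ∈ 𝓝 x)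
    (hfU : ContinuousOn f U) (hf : HasStrictFDerivAt f f' x) (hf' : f' ≠ 0) :
    ∃ s ∈ 𝓝 x, BandMeasureLinear μ f c s := by
  obtain ⟨v, hv⟩ : ∃ v, f' v = 1 := by
    obtain ⟨u, hu⟩ : ∃ u, f' u ≠ 0 := by
      by_contra! h
      exact hf' (ContinuousLinearMap.ext h)
    exact ⟨(f' u)⁻¹ • u, by simp [hu]⟩
  have hv0 : 0 < ‖v‖ := norm_pos_iff.2 fun h => by simp [h] at hv
  obtain ⟨N, hN, happ⟩ : ∃ N ∈ 𝓝 x, ∀ y ∈ N, ∀ z ∈ N,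
      ‖f y - f z - f' (y - z)‖ ≤ (2 * ‖v‖)⁻¹ * ‖y - z‖ := by
    have hc : (0 : ℝ) < (2 * ‖v‖)⁻¹ := by positivity
    obtain ⟨N, hN, h⟩ := hf.approximates_deriv_on_nhds (c := ⟨_, hc.le⟩) (Or.inr hc)
    exact ⟨N, hN, fun y hy z hz => h y hy z hz⟩
  obtain ⟨r, hr, hrN⟩ := Metric.mem_nhds_iff.1 (inter_mem hU hN)
  have hfin : μ (ball x (r + ‖v‖)) ≠ ⊤ := measure_ball_lt_top.ne
  refine ⟨ball x r, ball_mem_nhds x hr, 8 * μ.real (ball x (r + ‖v‖)), by positivity, 1 / 4,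
    by norm_num, fun ε hε hle => ?_⟩
  set S := ball x r ∩ {y | |f y - c| < ε} with hSdef
  have hSmeas : MeasurableSet S := by
    have hcont : ContinuousOn (fun y => |f y - c|) (ball x r) :=
      ((hfU.mono fun y hy => (hrN hy).1).sub continuousOn_const).abs
    exact (hcont.isOpen_inter_preimage isOpen_ball (isOpen_Iio (a := ε))).measurableSet
  have h4 : 1 ≤ (4 * ε)⁻¹ := (one_le_inv₀ (by positivity)).2 (by linarith)
  set n := ⌊(4 * ε)⁻¹⌋₊
  have hnle : (n : ℝ) ≤ (4 * ε)⁻¹ := Nat.floor_le (by positivity)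
  have hnge : (8 * ε)⁻¹ ≤ n := by
    have h1 : (1 : ℝ) ≤ n := by exact_mod_cast Nat.le_floor (by exact_mod_cast h4)
    have h2 : (4 * ε)⁻¹ < n + 1 := Nat.lt_floor_add_one _
    have h3 : (8 * ε)⁻¹ = (4 * ε)⁻¹ / 2 := by field_simp; norm_num
    linarith
  have key : n * μ S ≤ μ (ball x (r + ‖v‖)) := by
    refine natCast_mul_measure_le_of_translates μ hSmeas (w := (4 * ε) • v) inter_subset_left
      ?_ ?_
    · rw [norm_smul, Real.norm_of_nonneg (by positivity), ← mul_assoc]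
      have : (n : ℝ) * (4 * ε) ≤ 1 := by
        calc (n : ℝ) * (4 * ε) ≤ (4 * ε)⁻¹ * (4 * ε) := by gcongr
          _ = 1 := inv_mul_cancel₀ (by positivity)
      nlinarith
    · rintro y ⟨hyb, hy⟩ z ⟨hzb, hz⟩ t ht heq
      have h := happ y (hrN hyb).2 z (hrN hzb).2
      rw [heq, smul_smul, map_smul, hv, norm_smul, smul_eq_mul, mul_one, Real.norm_eq_abs,
        Real.norm_eq_abs] at h
      have hb : (2 * ‖v‖)⁻¹ * (|t * (4 * ε)| * ‖v‖) = |t * (4 * ε)| / 2 := by field_simp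
      rw [hb] at h
      have ht4 : 4 * ε ≤ |t * (4 * ε)| := by
        rw [abs_mul, abs_of_pos (by positivity : 0 < 4 * ε)]
        nlinarith
      have hyz : |f y - f z| < 2 * ε := by
        rw [mem_ofPred_eq, abs_lt] at hy hz
        rw [abs_lt]
        constructor <;> linarith
      have htri : |t * (4 * ε)| ≤ |f y - f z| + |f y - f z - t * (4 * ε)| := by
        have := abs_sub (f y - f z) (f y - f z - t * (4 * ε))
        rwa [sub_sub_cancel] at this
      linarith
  have hSfin : μ S ≠ ⊤ := (measure_mono inter_subset_left).trans_lt measure_ball_lt_top |>.ne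
  have hreal : (n : ℝ) * μ.real S ≤ μ.real (ball x (r + ‖v‖)) := by
    have := ENNReal.toReal_mono hfin key
    simpa [Measure.real] using this
  rw [← ENNReal.ofReal_toReal hSfin]
  refine ENNReal.ofReal_le_ofReal ?_
  change μ.real S ≤ _
  calc μ.real S = 8 * ε * ((8 * ε)⁻¹ * μ.real S) := by field_simp
    _ ≤ 8 * ε * (n * μ.real S) := by gcongr
    _ ≤ 8 * ε * μ.real (ball x (r + ‖v‖)) := by gcongr
    _ = 8 * μ.real (ball x (r + ‖v‖)) * ε := by ring

end SublevelBand

/-- If `X ⊆ ℝ^d` is bounded and open, `θ0` is `C¹` on a neighborhood of `closure X`, and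
`∇θ0 ≠ 0` at every point of `closure X` on the level set `{θ0 = c}`, then there are
`C > 0` and `ε0 > 0` with `|{x ∈ X : |θ0(x) − c| < ε}| ≤ C·ε` for all `0 < ε ≤ ε0`. -/
theorem stmt5 (d : ℕ) (X : Set (EuclideanSpace ℝ (Fin d))) (hXopen : IsOpen X)
    (hXbdd : Bornology.IsBounded X) (c : ℝ) (θ0 : EuclideanSpace ℝ (Fin d) → ℝ)
    (U : Set (EuclideanSpace ℝ (Fin d))) (hU : IsOpen U) (hXU : closure X ⊆ U)
    (hθ : ContDiffOn ℝ 1 θ0 U)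
    (hgrad : ∀ x ∈ closure X, θ0 x = c → fderiv ℝ θ0 x ≠ 0) :
    ∃ C : ℝ, 0 < C ∧ ∃ ε0 : ℝ, 0 < ε0 ∧ ∀ ε : ℝ, 0 < ε → ε ≤ ε0 →
      volume {x ∈ X | |θ0 x - c| < ε} ≤ ENNReal.ofReal (C * ε) := by
  have hband : BandMeasureLinear volume θ0 c (closure X) := by
    refine hXbdd.isCompact_closure.induction_on ⟨0, le_rfl, 1, one_pos, by simp⟩
      (fun _ _ hst ht => ht.mono hst) (fun _ _ hs ht => hs.union ht) fun x hx => ?_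
    have hxU : U ∈ nhds x := hU.mem_nhds (hXU hx)
    have hsmooth : ContDiffAt ℝ 1 θ0 x := hθ.contDiffAt hxU
    obtain ⟨s, hs, h⟩ : ∃ s ∈ nhds x, BandMeasureLinear volume θ0 c s := by
      by_cases hxc : θ0 x = c
      · exact exists_bandMeasureLinear_of_hasStrictFDerivAt volume c hxU hθ.continuousOn
          (hsmooth.hasStrictFDerivAt one_ne_zero) (hgrad x hx hxc)
      · exact exists_bandMeasureLinear_of_ne volume hsmooth.continuousAt hxc
    exact ⟨s, mem_nhdsWithin_of_mem_nhds hs, h⟩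
  obtain ⟨C, hC, ε0, hε0, h⟩ := hband.mono subset_closure
  refine ⟨C + 1, by positivity, ε0, hε0, fun ε hε hle => (h ε hε hle).trans ?_⟩
  exact ENNReal.ofReal_le_ofReal (by nlinarith)
end

section
/- Let X ⊆ ℝ^d be a bounded open set and D ⊆ X a measurable set. Let N ≥ 1, κ1, …, κ_N > 0, and −∞ = c_0 < c_1 < … < c_{N−1} < c_N = ∞. Let θ0 be a real-valued function that is twice continuously differentiable on a neighborhood of the closure of X such that, for each i = 1, …, N−1 and each x in the closure of X with θ0(x) = c_i, one has ∇θ0(x) ≠ 0. Then there exist constants C > 0 and ε0 > 0, depending on θ0, X, D and the levels c_i, such that for all 0 < ε ≤ ε0, ‖Φ_ε(θ0) − Φ(θ0)‖_{L²(D)} ≤ C·ε^{1/2}. -/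
open MeasureTheory

/-- Piecewise linear approximation `H_ε` of the Heaviside function. -/
noncomputable def Heps (ε z : ℝ) : ℝ :=
  if z < -ε then 0 else if z < ε then z / (2 * ε) + 1 / 2 else 1

/-- The term `H_ε(z − c_j)` with the conventions `H_ε(z − c_0) := 1`, `H_ε(z − c_N) := 0`. -/
noncomputable def HepsTerm (ε : ℝ) (N : ℕ) (cs : Fin (N + 1) → ℝ)
    (j : Fin (N + 1)) (z : ℝ) : ℝ :=
  if j.val = 0 then 1 else if j.val = N then 0 else Heps ε (z - cs j)

/-- The continuous level set parametrization
`Φ_ε(θ) = Σ_{i=1}^{N} κ_i·[H_ε(θ − c_{i−1}) − H_ε(θ − c_i)]`. -/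
noncomputable def PhiEps {α : Type*} (ε : ℝ) (N : ℕ) (cs : Fin (N + 1) → ℝ)
    (κ : Fin N → ℝ) (θ : α → ℝ) (x : α) : ℝ :=
  ∑ i : Fin N, κ i * (HepsTerm ε N cs i.castSucc (θ x) - HepsTerm ε N cs i.succ (θ x))

/-- The level set parametrization `Φ(θ) = Σ_{i=1}^{N} κ_i·1_{{c_{i−1} ≤ θ < c_i}}`, with
`c_0 = −∞` and `c_N = ∞` (no lower constraint for `i = 1`, no upper for `i = N`). -/
noncomputable def PhiLevel {α : Type*} (N : ℕ) (cs : Fin (N + 1) → ℝ)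
    (κ : Fin N → ℝ) (θ : α → ℝ) (x : α) : ℝ :=
  ∑ i : Fin N, κ i *
    Set.indicator
      {z : ℝ | (i.val = 0 ∨ cs i.castSucc ≤ z) ∧ (i.val = N - 1 ∨ z < cs i.succ)}
      (fun _ => (1 : ℝ)) (θ x)

open Metric Filter Topology in
/-- Near a point where `f` has nonzero strict derivative, the layers `{|f - c| ≤ ε}` have measure
`O(ε)`: sufficiently spaced translates of a layer are disjoint and stay in a fixed ball. -/
lemma exists_nhds_measure_layer_le_of_hasStrictFDerivAt
    {E : Type*} [NormedAddCommGroup E] [NormedSpace ℝ E] [FiniteDimensional ℝ E]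
    [MeasurableSpace E] [BorelSpace E] (μ : Measure E) [μ.IsAddHaarMeasure]
    {f : E → ℝ} {L : E →L[ℝ] ℝ} {x : E} {U : Set E} (hU : U ∈ 𝓝 x) (hf : ContinuousOn f U)
    (hL : HasStrictFDerivAt f L x) (hL0 : L ≠ 0) (c : ℝ) :
    ∃ V ∈ 𝓝 x, ∃ C : ℝ, ∀ ε : ℝ, 0 < ε →
      μ (V ∩ {y | |f y - c| ≤ ε}) ≤ ENNReal.ofReal (C * ε) := by
  obtain ⟨v, hv⟩ : ∃ v, L v = 1 := by
    obtain ⟨w, hw⟩ : ∃ w, L w ≠ 0 := by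
      by_contra! h
      exact hL0 (ContinuousLinearMap.ext h)
    exact ⟨(L w)⁻¹ • w, by simp [hw]⟩
  have hv0 : 0 < ‖v‖ := by
    rw [norm_pos_iff]
    rintro rfl
    simp at hv
  obtain ⟨W, hW, hWslope⟩ : ∃ W ∈ 𝓝 x, ∀ a ∈ W, ∀ b ∈ W,
      ‖f a - f b - L (a - b)‖ ≤ (1 / (2 * ‖v‖)) * ‖a - b‖ := by
    have h := hL.isLittleO.def (c := 1 / (2 * ‖v‖)) (by positivity)
    rw [nhds_prod_eq] at h
    obtain ⟨W, hW, h⟩ := mem_prod_self_iff.1 h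
    exact ⟨W, hW, fun a ha b hb => h (Set.mk_mem_prod ha hb)⟩
  obtain ⟨r, hr, hrWU⟩ := nhds_basis_closedBall.mem_iff.1 (inter_mem hW hU)
  have hslope : ∀ y s, 0 < s → y ∈ closedBall x r → y + s • v ∈ closedBall x r →
      s / 2 ≤ f (y + s • v) - f y := by
    intro y s hs hy hys
    have h := hWslope _ (hrWU hys).1 _ (hrWU hy).1
    rw [add_sub_cancel_left, map_smul, hv, norm_smul, Real.norm_of_nonneg hs.le,
      smul_eq_mul, mul_one, Real.norm_eq_abs] at h
    have h' : 1 / (2 * ‖v‖) * (s * ‖v‖) = s / 2 := by field_simp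
    rw [h'] at h
    linarith [neg_le_of_abs_le h]
  set M := μ.real (closedBall x (r + 1)) with hM
  refine ⟨closedBall x r, closedBall_mem_nhds x hr, M * (5 * ‖v‖), fun ε hε => ?_⟩
  set A := closedBall x r ∩ {y | |f y - c| ≤ ε}
  have hAclosed : IsClosed A :=
    (hf.mono fun y hy => (hrWU hy).2).preimage_isClosed_of_isClosed (t := {t | |t - c| ≤ ε})
      isClosed_closedBall (isClosed_le (by fun_prop) continuous_const)
  have hAfin : μ A ≠ ⊤ :=
    ((measure_mono Set.inter_subset_left).trans_lt measure_closedBall_lt_top).ne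
  set q : ℝ := 1 / (5 * ε * ‖v‖) with hq
  have hq0 : 0 < q := by positivity
  set n := ⌊q⌋₊ + 1
  let τ : ℕ → E := fun k => (k * (5 * ε)) • v
  let T : ℕ → Set E := fun k => (fun y => y + τ k) ⁻¹' A
  have hmeas : ∀ k, MeasurableSet (T k) := fun k =>
    (hAclosed.preimage (by fun_prop)).measurableSet
  have hdisj : ∀ k l : ℕ, k < l → Disjoint (T k) (T l) := by
    intro k l hkl
    rw [Set.disjoint_left]
    intro y hk hl
    have hkl' : (k : ℝ) + 1 ≤ l := by exact_mod_cast hkl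
    have hs : 5 * ε ≤ (l - k) * (5 * ε) := by nlinarith
    have he : y + τ l = y + τ k + ((l - k) * (5 * ε)) • v := by
      simp only [τ]
      module
    have h1 : y + τ k ∈ A := hk
    have h2 : y + τ l ∈ A := hl
    rw [he] at h2
    have h3 := hslope _ _ (by linarith) h1.1 h2.1
    have h4 : |f (y + τ k) - c| ≤ ε := h1.2
    have h5 : |f (y + τ k + ((l - k) * (5 * ε)) • v) - c| ≤ ε := h2.2
    linarith [(abs_le.1 h4).1, (abs_le.1 h5).2]
  have hsub : (⋃ k ∈ Finset.range n, T k) ⊆ closedBall x (r + 1) := by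
    intro y hy
    simp only [Set.mem_iUnion, Finset.mem_range] at hy
    obtain ⟨k, hk, hy⟩ := hy
    have hkq : (k : ℝ) ≤ q := (Nat.le_floor_iff hq0.le).1 (Nat.lt_succ_iff.1 hk)
    have hτ : ‖τ k‖ ≤ 1 := by
      simp only [τ, norm_smul]
      rw [Real.norm_of_nonneg (by positivity)]
      calc (k : ℝ) * (5 * ε) * ‖v‖ ≤ q * (5 * ε) * ‖v‖ := by gcongr
        _ = 1 := by rw [hq]; field_simp
    have h1 : ‖y + τ k - x‖ ≤ r := by
      have h : y + τ k ∈ A := hy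
      simpa [dist_eq_norm] using h.1
    rw [mem_closedBall, dist_eq_norm]
    calc ‖y - x‖ = ‖(y + τ k - x) - τ k‖ := by congr 1; abel
      _ ≤ _ := (norm_sub_le _ _).trans (add_le_add h1 hτ)
  have hsum : n * μ A ≤ μ (closedBall x (r + 1)) := by
    have h := measure_biUnion_finset (μ := μ) (s := Finset.range n) (f := T)
      (fun k _ l _ hkl => (lt_or_gt_of_ne hkl).elim (hdisj k l) fun h => (hdisj l k h).symm)
      (fun k _ => hmeas k)
    simp only [T, measure_preimage_add_right, Finset.sum_const, Finset.card_range,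
      nsmul_eq_mul] at h
    rw [← h]
    exact measure_mono hsub
  have hreal : n * μ.real A ≤ M := by
    have h := ENNReal.toReal_mono measure_closedBall_lt_top.ne hsum
    simpa [Measure.real, hM] using h
  have hqn : q ≤ n := by
    simpa [n] using (Nat.lt_floor_add_one q).le
  rw [← ENNReal.ofReal_toReal hAfin]
  apply ENNReal.ofReal_le_ofReal
  have h1 : q * μ.real A ≤ M := (mul_le_mul_of_nonneg_right hqn measureReal_nonneg).trans hreal
  have h2 : μ.real A = (q * μ.real A) * (5 * ε * ‖v‖) := by
    rw [hq]; field_simp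
  change μ.real A ≤ _
  rw [h2]
  calc _ ≤ M * (5 * ε * ‖v‖) := by gcongr
    _ = _ := by ring

open Metric Filter Topology in
/-- If `f` is `C¹` near a compact set `K` with nonvanishing derivative on `K ∩ {f = c}`, then
the layers `K ∩ {|f - c| ≤ ε}` have measure `O(ε)`. -/
lemma IsCompact.exists_measure_layer_le
    {E : Type*} [NormedAddCommGroup E] [NormedSpace ℝ E] [FiniteDimensional ℝ E]
    [MeasurableSpace E] [BorelSpace E] (μ : Measure E) [μ.IsAddHaarMeasure]
    {f : E → ℝ} {K U : Set E} (hK : IsCompact K) (hU : IsOpen U) (hKU : K ⊆ U)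
    (hf : ContDiffOn ℝ 1 f U) (c : ℝ) (hgrad : ∀ x ∈ K, f x = c → fderiv ℝ f x ≠ 0) :
    ∃ C : ℝ, 0 ≤ C ∧ ∀ ε : ℝ, 0 < ε →
      μ (K ∩ {y | |f y - c| ≤ ε}) ≤ ENNReal.ofReal (C * ε) := by
  refine hK.induction_on (p := fun S => ∃ C : ℝ, 0 ≤ C ∧ ∀ ε : ℝ, 0 < ε →
      μ (S ∩ {y | |f y - c| ≤ ε}) ≤ ENNReal.ofReal (C * ε)) ⟨0, le_rfl, by simp⟩ ?_ ?_ ?_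
  · rintro s t hst ⟨C, hC, h⟩
    exact ⟨C, hC, fun ε hε =>
      (measure_mono (Set.inter_subset_inter_left _ hst)).trans (h ε hε)⟩
  · rintro s t ⟨C, hC, h⟩ ⟨C', hC', h'⟩
    refine ⟨C + C', add_nonneg hC hC', fun ε hε => ?_⟩
    rw [Set.union_inter_distrib_right, add_mul, ENNReal.ofReal_add (by positivity) (by positivity)]
    exact (measure_union_le _ _).trans (add_le_add (h ε hε) (h' ε hε))
  · intro x hx
    have hxU : U ∈ 𝓝 x := hU.mem_nhds (hKU hx)
    suffices h : ∃ V ∈ 𝓝 x, ∃ C : ℝ, ∀ ε : ℝ, 0 < ε →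
        μ (V ∩ {y | |f y - c| ≤ ε}) ≤ ENNReal.ofReal (C * ε) by
      obtain ⟨V, hV, C, h⟩ := h
      refine ⟨V, mem_nhdsWithin_of_mem_nhds hV, |C|, abs_nonneg C, fun ε hε =>
        (h ε hε).trans (ENNReal.ofReal_le_ofReal ?_)⟩
      gcongr
      exact le_abs_self C
    have hat : ContDiffAt ℝ 1 f x := hf.contDiffAt hxU
    by_cases hxc : f x = c
    · exact exists_nhds_measure_layer_le_of_hasStrictFDerivAt μ hxU hf.continuousOn
        (hat.hasStrictFDerivAt one_ne_zero) (hgrad x hx hxc) c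
    · have hpos : 0 < |f x - c| := abs_pos.2 (sub_ne_zero.2 hxc)
      set δ := |f x - c| / 2 with hδ
      have hδ0 : 0 < δ := by positivity
      have hev : ∀ᶠ y in 𝓝 x, δ < |f y - c| :=
        ((hat.continuousAt.sub continuousAt_const).abs).eventually_const_lt (by
          simp only [hδ, Pi.sub_apply]; linarith)
      refine ⟨{y | δ < |f y - c|} ∩ closedBall x 1,
        inter_mem hev (closedBall_mem_nhds x one_pos), μ.real (closedBall x 1) / δ,
        fun ε hε => ?_⟩
      rcases lt_or_ge δ ε with hδε | hδε
      · calc _ ≤ μ (closedBall x 1) := measure_mono fun y hy => hy.1.2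
          _ = ENNReal.ofReal (μ.real (closedBall x 1)) :=
            (ENNReal.ofReal_toReal measure_closedBall_lt_top.ne).symm
          _ ≤ _ := by
            apply ENNReal.ofReal_le_ofReal
            rw [div_mul_eq_mul_div, le_div_iff₀ hδ0]
            gcongr
      · have he : {y | δ < |f y - c|} ∩ closedBall x 1 ∩ {y | |f y - c| ≤ ε} = ∅ := by
          ext y
          simp only [Set.mem_inter_iff, Set.mem_ofPred_eq, Set.mem_empty_iff_false, iff_false]
          rintro ⟨⟨h1, -⟩, h2⟩
          linarith
        simp [he]

/-- The sharp counterpart of `HepsTerm`: the indicator of `{c_j ≤ z}`. -/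
noncomputable def stepTerm (N : ℕ) (cs : Fin (N + 1) → ℝ) (j : Fin (N + 1)) (z : ℝ) : ℝ :=
  if j.val = 0 then 1 else if j.val = N then 0 else if cs j ≤ z then 1 else 0

lemma abs_HepsTerm_sub_stepTerm_le_one {ε : ℝ} (hε : 0 < ε) (N : ℕ) (cs : Fin (N + 1) → ℝ)
    (j : Fin (N + 1)) (z : ℝ) : |HepsTerm ε N cs j z - stepTerm N cs j z| ≤ 1 := by
  have hlin : ∀ w, -ε ≤ w → w < ε → 0 ≤ w / (2 * ε) + 1 / 2 ∧ w / (2 * ε) + 1 / 2 ≤ 1 := by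
    intro w h1 h2
    have h : w / (2 * ε) + 1 / 2 = (w + ε) / (2 * ε) := by field_simp
    rw [h]
    exact ⟨div_nonneg (by linarith) (by linarith), (div_le_one (by linarith)).2 (by linarith)⟩
  unfold HepsTerm stepTerm Heps
  split_ifs with h1 h2 h3 h4 h5 h6 h7 <;> (try norm_num) <;>
    (have := hlin (z - cs j) (by linarith) (by linarith); rw [abs_le]; constructor <;> linarith)

lemma HepsTerm_eq_stepTerm {ε : ℝ} (hε : 0 < ε) (N : ℕ) (cs : Fin (N + 1) → ℝ)
    (j : Fin (N + 1)) (z : ℝ) (h : 0 < j.val → j.val < N → ε < |z - cs j|) :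
    HepsTerm ε N cs j z = stepTerm N cs j z := by
  unfold HepsTerm stepTerm Heps
  by_cases h0 : j.val = 0
  · simp [h0]
  by_cases h1 : j.val = N
  · simp [h1]
  have h := h (by omega) (by omega)
  rcases lt_abs.1 h with h | h
  · rw [if_neg h0, if_neg h1, if_neg h0, if_neg h1, if_neg (by linarith), if_neg (by linarith),
      if_pos (by linarith)]
  · rw [if_neg h0, if_neg h1, if_neg h0, if_neg h1, if_pos (by linarith), if_neg (by linarith)]

lemma PhiLevel_eq_sum_stepTerm {α : Type*} (N : ℕ) (κ : Fin N → ℝ) (cs : Fin (N + 1) → ℝ)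
    (hmono : ∀ i j : Fin (N + 1), i < j → 0 < i.val → j.val < N → cs i < cs j)
    (θ : α → ℝ) (x : α) :
    PhiLevel N cs κ θ x =
      ∑ i : Fin N, κ i * (stepTerm N cs i.castSucc (θ x) - stepTerm N cs i.succ (θ x)) := by
  unfold PhiLevel
  refine Finset.sum_congr rfl fun i _ => ?_
  congr 1
  have hi := i.isLt
  have hlast : i.val = N - 1 ↔ i.val + 1 = N := by omega
  have hm := hmono i.castSucc i.succ Fin.castSucc_lt_succ
  simp only [Fin.val_castSucc, Fin.val_succ] at hm
  simp only [Set.indicator_apply, Set.mem_ofPred_eq, stepTerm, Fin.val_castSucc, Fin.val_succ,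
    hlast, hi.ne, if_false, Nat.add_eq_zero_iff, one_ne_zero, and_false]
  by_cases h0 : i.val = 0 <;> by_cases h1 : i.val + 1 = N
  · simp only [h1]
    simp [h0]
  · simp only [h1]
    by_cases h2 : cs i.succ ≤ θ x
    · simp [h0, h2, not_lt.2 h2]
    · simp [h0, h2, not_le.1 h2]
  · simp [h0, h1]
  · have hm := hm (by omega) (by omega)
    by_cases h2 : cs i.succ ≤ θ x
    · simp [h0, h1, h2, not_lt.2 h2, hm.le.trans h2]
    · simp [h0, h1, h2, not_le.1 h2]

/-- Approximation property of the smoothened level set parametrization: if `θ0` is `C²`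
near `closure X` with nonvanishing gradient on each level set `{θ0 = c_i}`, then
`‖Φ_ε(θ0) − Φ(θ0)‖_{L²(D)} ≤ C·ε^{1/2}` for all sufficiently small `ε > 0`. -/
theorem stmt6 (d : ℕ) (X : Set (EuclideanSpace ℝ (Fin d))) (hXopen : IsOpen X)
    (hXbdd : Bornology.IsBounded X) (D : Set (EuclideanSpace ℝ (Fin d)))
    (hD : MeasurableSet D) (hDX : D ⊆ X)
    (N : ℕ) (hN : 1 ≤ N) (κ : Fin N → ℝ) (hκ : ∀ i, 0 < κ i)
    (cs : Fin (N + 1) → ℝ)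
    (hmono : ∀ i j : Fin (N + 1), i < j → 0 < i.val → j.val < N → cs i < cs j)
    (θ0 : EuclideanSpace ℝ (Fin d) → ℝ)
    (U : Set (EuclideanSpace ℝ (Fin d))) (hU : IsOpen U) (hXU : closure X ⊆ U)
    (hθ : ContDiffOn ℝ 2 θ0 U)
    (hgrad : ∀ j : Fin (N + 1), 0 < j.val → j.val < N →
      ∀ x ∈ closure X, θ0 x = cs j → fderiv ℝ θ0 x ≠ 0) :
    ∃ C : ℝ, 0 < C ∧ ∃ ε0 : ℝ, 0 < ε0 ∧ ∀ ε : ℝ, 0 < ε → ε ≤ ε0 →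
      Real.sqrt (∫ x in D, (PhiEps ε N cs κ θ0 x - PhiLevel N cs κ θ0 x) ^ 2) ≤
        C * Real.sqrt ε := by
  have hKc : IsCompact (closure X) := hXbdd.isCompact_closure
  set S : ℝ → Fin (N + 1) → Set (EuclideanSpace ℝ (Fin d)) :=
    fun ε j => closure X ∩ {y | |θ0 y - cs j| ≤ ε}
  have hlayer : ∀ j : Fin (N + 1), ∃ C : ℝ, 0 ≤ C ∧ (0 < j.val → j.val < N →
      ∀ ε : ℝ, 0 < ε → volume (S ε j) ≤ ENNReal.ofReal (C * ε)) := by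
    intro j
    by_cases h : 0 < j.val ∧ j.val < N
    · obtain ⟨C, hC, hb⟩ := hKc.exists_measure_layer_le volume hU hXU
        (hθ.of_le one_le_two) (cs j) (hgrad j h.1 h.2)
      exact ⟨C, hC, fun _ _ => hb⟩
    · exact ⟨0, le_rfl, fun h0 h1 => absurd ⟨h0, h1⟩ h⟩
  choose C hC hvol using hlayer
  set J : Finset (Fin (N + 1)) := {j | 0 < j.val ∧ j.val < N}
  set M : ℝ := ∑ i : Fin N, κ i * 2
  have hM0 : 0 ≤ M := Finset.sum_nonneg fun i _ => mul_nonneg (hκ i).le zero_le_two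
  set B : ℝ := M ^ 2 * ∑ j ∈ J, C j with hB
  have hB0 : 0 ≤ B := mul_nonneg (sq_nonneg _) (Finset.sum_nonneg fun j _ => hC j)
  refine ⟨√B + 1, by positivity, 1, one_pos, fun ε hε _ => ?_⟩
  suffices hint : ∫ x in D, (PhiEps ε N cs κ θ0 x - PhiLevel N cs κ θ0 x) ^ 2 ≤ B * ε by
    calc _ ≤ √(B * ε) := Real.sqrt_le_sqrt hint
      _ = √B * √ε := Real.sqrt_mul hB0 ε
      _ ≤ _ := by gcongr; linarith
  have hdiff : ∀ x, PhiEps ε N cs κ θ0 x - PhiLevel N cs κ θ0 x =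
      ∑ i : Fin N, κ i * ((HepsTerm ε N cs i.castSucc (θ0 x) - stepTerm N cs i.castSucc (θ0 x)) -
        (HepsTerm ε N cs i.succ (θ0 x) - stepTerm N cs i.succ (θ0 x))) := by
    intro x
    rw [PhiLevel_eq_sum_stepTerm N κ cs hmono, PhiEps, ← Finset.sum_sub_distrib]
    exact Finset.sum_congr rfl fun i _ => by ring
  have hbound : ∀ x, |PhiEps ε N cs κ θ0 x - PhiLevel N cs κ θ0 x| ≤ M := by
    intro x
    rw [hdiff]
    refine (Finset.abs_sum_le_sum_abs _ _).trans (Finset.sum_le_sum fun i _ => ?_)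
    rw [abs_mul, abs_of_pos (hκ i)]
    refine mul_le_mul_of_nonneg_left ((abs_sub _ _).trans ?_) (hκ i).le
    linarith [abs_HepsTerm_sub_stepTerm_le_one hε N cs i.castSucc (θ0 x),
      abs_HepsTerm_sub_stepTerm_le_one hε N cs i.succ (θ0 x)]
  set T := ⋃ j ∈ J, S ε j
  have hzero : ∀ x ∈ D, x ∉ T → PhiEps ε N cs κ θ0 x - PhiLevel N cs κ θ0 x = 0 := by
    intro x hx hxT
    have hterm : ∀ j, HepsTerm ε N cs j (θ0 x) = stepTerm N cs j (θ0 x) := by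
      intro j
      refine HepsTerm_eq_stepTerm hε N cs j _ fun h0 h1 => ?_
      by_contra! hle
      exact hxT (Set.mem_biUnion (Finset.mem_filter.2 ⟨Finset.mem_univ j, h0, h1⟩) ⟨subset_closure (hDX hx), hle⟩)
    rw [hdiff]
    exact Finset.sum_eq_zero fun i _ => by simp [hterm]
  have hTmeas : MeasurableSet T := by
    refine Finset.measurableSet_biUnion _ fun j _ => IsClosed.measurableSet ?_
    exact (hθ.continuousOn.mono hXU).preimage_isClosed_of_isClosed (t := {t | |t - cs j| ≤ ε})
      isClosed_closure (isClosed_le (by fun_prop) continuous_const)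
  have hTvol : volume T ≤ ENNReal.ofReal ((∑ j ∈ J, C j) * ε) := by
    rw [Finset.sum_mul, ENNReal.ofReal_sum_of_nonneg fun j _ => mul_nonneg (hC j) hε.le]
    refine (measure_biUnion_finset_le _ _).trans (Finset.sum_le_sum fun j hj => ?_)
    have hj := (Finset.mem_filter.1 hj).2
    exact hvol j hj.1 hj.2 ε hε
  have hTfin : volume T ≠ ⊤ := (hTvol.trans_lt ENNReal.ofReal_lt_top).ne
  have hind : Integrable (T.indicator fun _ => M ^ 2) (volume : Measure _) :=
    (integrable_indicator_iff hTmeas).2 (integrableOn_const hTfin)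
  calc ∫ x in D, (PhiEps ε N cs κ θ0 x - PhiLevel N cs κ θ0 x) ^ 2
      ≤ ∫ x in D, T.indicator (fun _ => M ^ 2) x := by
        refine integral_mono_of_nonneg (ae_of_all _ fun x => sq_nonneg _) hind.integrableOn ?_
        filter_upwards [ae_restrict_mem hD] with x hx
        by_cases hxT : x ∈ T
        · rw [Set.indicator_of_mem hxT]
          exact sq_le_sq.2 ((hbound x).trans (le_abs_self M))
        · simp [hzero x hx hxT, hxT]
    _ ≤ ∫ x, T.indicator (fun _ => M ^ 2) x :=
        setIntegral_le_integral hind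
          (ae_of_all _ (Set.indicator_nonneg fun _ _ => sq_nonneg M))
    _ = volume.real T * M ^ 2 := by
        rw [integral_indicator hTmeas, setIntegral_const, smul_eq_mul]
    _ ≤ ((∑ j ∈ J, C j) * ε) * M ^ 2 := by
        gcongr
        exact ENNReal.toReal_le_of_le_ofReal
          (mul_nonneg (Finset.sum_nonneg fun j _ => hC j) hε.le) hTvol
    _ = B * ε := by rw [hB]; ring
end
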